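/- Let d ≥ 2, let Φ = (1/√d) Σ_i e_i ⊗ e_i be the maximally entangled state in ℂ^d ⊗ ℂ^d, let a, b be unit vectors in ℂ^d, and let (U_a, U_b) be distributed according to the product Haar measure on U(d) × U(d). Then for every t ∈ [0, 1/d], the probability that |⟨a ⊗ b, (U_a ⊗ U_b)Φ⟩|² ≤ t equals 1 − (1 − dt)^{d−1}; equivalently, the fidelity of a Haar-random locally rotated maximally entangled state with a fixed product state has probability density f ↦ d(d−1)(1−df)^{d−2} on [0, 1/d] and density 0 on (1/d, 1]. -/

import Mathlib

open MeasureTheory Matrix Finset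
open scoped ComplexConjugate

noncomputable section

/-- Borel measurable structure on the unitary group `U(d)`. -/
instance (n : Type*) [Fintype n] [DecidableEq n] :
    MeasurableSpace (Matrix.unitaryGroup n ℂ) := borel _

instance (n : Type*) [Fintype n] [DecidableEq n] :
    BorelSpace (Matrix.unitaryGroup n ℂ) := ⟨rfl⟩

/-- The Kronecker-product action of a pair of `d × d` matrices on a bipartite vector in
`ℂ^d ⊗ ℂ^d`, identified with `Fin d × Fin d → ℂ`. -/
def kronAct {d : ℕ} (Ua Ub : Matrix (Fin d) (Fin d) ℂ) (ψ : Fin d × Fin d → ℂ) :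
    Fin d × Fin d → ℂ :=
  fun p => ∑ q : Fin d × Fin d, Ua p.1 q.1 * Ub p.2 q.2 * ψ q

/-- The standard Hermitian inner product on `ℂ^d ⊗ ℂ^d`. -/
def bipInner {d : ℕ} (x y : Fin d × Fin d → ℂ) : ℂ :=
  ∑ p : Fin d × Fin d, conj (x p) * y p

/-- The maximally entangled state `Φ = (1/√d) ∑ i, e i ⊗ e i` in `ℂ^d ⊗ ℂ^d`. -/
def maxEnt (d : ℕ) : Fin d × Fin d → ℂ :=
  fun p => if p.1 = p.2 then (1 / Real.sqrt d : ℂ) else 0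


instance instSCU (d : ℕ) : SecondCountableTopology (Matrix.unitaryGroup (Fin d) ℂ) :=
  haveI : SecondCountableTopology (Matrix (Fin d) (Fin d) ℂ) :=
    inferInstanceAs (SecondCountableTopology (Fin d → Fin d → ℂ))
  TopologicalSpace.Subtype.secondCountableTopology
    (fun x : Matrix (Fin d) (Fin d) ℂ => x ∈ Matrix.unitaryGroup (Fin d) ℂ)

lemma measure_preimage_mul_right_aux {G : Type*} [Group G] [MeasurableSpace G]
    [MeasurableMul₂ G] [MeasurableInv G] (μ : Measure G) [IsProbabilityMeasure μ]
    [μ.IsMulLeftInvariant] (g : G) (A : Set G) (hA : MeasurableSet A) :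
    μ ((fun h => h * g) ⁻¹' A) = μ A := by
  have key : ∀ B : Set G, MeasurableSet B → μ.inv B = μ B := by
    intro B hB
    have hm : Measurable (fun p : G × G => p.1 * p.2) := measurable_mul
    have h1 : (μ.inv.prod μ) ((fun p : G × G => p.1 * p.2) ⁻¹' B) = μ B := by
      rw [Measure.prod_apply (hm hB)]
      have : ∀ x : G, μ (Prod.mk x ⁻¹' ((fun p : G × G => p.1 * p.2) ⁻¹' B)) = μ B :=
        fun x => measure_preimage_mul μ x B
      simp [this, Measure.inv_apply]
    have h2 : (μ.inv.prod μ) ((fun p : G × G => p.1 * p.2) ⁻¹' B) = μ.inv B := by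
      rw [Measure.prod_apply_symm (hm hB)]
      have : ∀ x : G, μ.inv ((fun y => (y, x)) ⁻¹' ((fun p : G × G => p.1 * p.2) ⁻¹' B))
          = μ.inv B :=
        fun x => measure_preimage_mul_right μ.inv x B
      simp [this]
    rw [← h1, h2]
  rw [← key A hA, ← key _ ((measurable_mul_const g) hA)]
  exact measure_preimage_mul_right μ.inv g A

lemma lintegral_radial (f : ℝ → ENNReal) (hf : Measurable f) :
    ∫⁻ z : ℂ, f ‖z‖ = ENNReal.ofReal (2 * Real.pi) *
      ∫⁻ ρ in Set.Ioi (0 : ℝ), ENNReal.ofReal ρ * f ρ := by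
  rw [← Complex.lintegral_comp_polarCoord_symm]
  have : ∫⁻ p in polarCoord.target, ENNReal.ofReal p.1 • f ‖Complex.polarCoord.symm p‖
     = ∫⁻ p in polarCoord.target, (ENNReal.ofReal p.1 * f p.1) * 1 := by
    refine setLIntegral_congr_fun polarCoord.open_target.measurableSet ?_
    intro p hp
    have h0 : 0 < p.1 := hp.1
    simp [abs_of_pos h0]
  rw [this, polarCoord_target, Measure.volume_eq_prod, ← Measure.prod_restrict,
    lintegral_prod_mul (f := fun x => ENNReal.ofReal x * f x) (g := fun _ => 1)
      (by fun_prop) (by fun_prop), mul_comm]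
  congr 1
  rw [lintegral_const, one_mul, Measure.restrict_apply_univ, Real.volume_Ioo]
  ring_nf

lemma lintegral_half (b R : ℝ) (hb : 0 < b) (hR : 0 ≤ R) :
    ∫⁻ ρ in Set.Ioi R, ENNReal.ofReal (ρ * Real.exp (-b * ρ ^ 2))
      = ENNReal.ofReal (Real.exp (-b * R ^ 2) / (2 * b)) := by
  have hd : ∀ x ∈ Set.Ioi R, HasDerivAt (fun x => - Real.exp (-b * x ^ 2) / (2 * b))
      (x * Real.exp (-b * x ^ 2)) x := by
    intro x _
    have h1 : HasDerivAt (fun x : ℝ => -b * x ^ 2) (-b * (2 * x)) x := by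
      simpa using (hasDerivAt_pow 2 x).const_mul (-b)
    refine (h1.exp.neg.div_const (2 * b)).congr_deriv ?_
    field_simp
  have hc : ContinuousWithinAt (fun x => - Real.exp (-b * x ^ 2) / (2 * b)) (Set.Ici R) R := by
    apply Continuous.continuousWithinAt; fun_prop
  have hp : ∀ x ∈ Set.Ioi R, 0 ≤ x * Real.exp (-b * x ^ 2) := by
    intro x hx
    have : R < x := hx
    have : 0 ≤ x := by linarith
    positivity
  have ht : Filter.Tendsto (fun x => - Real.exp (-b * x ^ 2) / (2 * b)) Filter.atTop (nhds 0) := by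
    have h1 : Filter.Tendsto (fun x : ℝ => -b * x ^ 2) Filter.atTop Filter.atBot :=
      (Filter.tendsto_pow_atTop (two_ne_zero)).const_mul_atTop_of_neg (by linarith)
    have := ((Real.tendsto_exp_atBot.comp h1).neg.div_const (2 * b))
    simpa using this
  have hi := integrableOn_Ioi_deriv_of_nonneg hc hd hp ht
  rw [← ofReal_integral_eq_lintegral_ofReal hi, integral_Ioi_of_hasDerivAt_of_tendsto hc hd hi ht]
  · congr 1; ring
  · exact (ae_restrict_iff' measurableSet_Ioi).2 (Filter.Eventually.of_forall hp)

lemma gauss_total (b : ℝ) (hb : 0 < b) :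
    ∫⁻ z : ℂ, ENNReal.ofReal (Real.exp (-b * ‖z‖ ^ 2)) = ENNReal.ofReal (Real.pi / b) := by
  rw [lintegral_radial (fun ρ => ENNReal.ofReal (Real.exp (-b * ρ ^ 2))) (by fun_prop)]
  have : ∀ ρ : ℝ, ENNReal.ofReal ρ * ENNReal.ofReal (Real.exp (-b * ρ ^ 2)) =
      ENNReal.ofReal (ρ * Real.exp (-b * ρ ^ 2)) := fun ρ =>
    (ENNReal.ofReal_mul' (Real.exp_nonneg _)).symm
  simp_rw [this]
  rw [lintegral_half b 0 hb le_rfl, ← ENNReal.ofReal_mul (by positivity)]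
  congr 1
  simp
  field_simp

lemma gauss_tail (r : ℝ) (hr : 0 ≤ r) :
    ∫⁻ z : ℂ, {z : ℂ | r < ‖z‖ ^ 2}.indicator
      (fun z => ENNReal.ofReal (Real.exp (-1 * ‖z‖ ^ 2))) z
      = ENNReal.ofReal (Real.pi * Real.exp (-r)) := by
  have h := lintegral_radial ((Set.Ioi (√r)).indicator
    (fun ρ => ENNReal.ofReal (Real.exp (-1 * ρ ^ 2))))
    ((by fun_prop : Measurable (fun ρ : ℝ => ENNReal.ofReal (Real.exp (-1 * ρ ^ 2)))).indicator measurableSet_Ioi)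
  have e1 : ∀ z : ℂ, (Set.Ioi (√r)).indicator
    (fun ρ => ENNReal.ofReal (Real.exp (-1 * ρ ^ 2))) ‖z‖ = {z : ℂ | r < ‖z‖ ^ 2}.indicator
      (fun z => ENNReal.ofReal (Real.exp (-1 * ‖z‖ ^ 2))) z := by
    intro z
    simp [Set.indicator, Real.sqrt_lt hr (norm_nonneg z)]
  simp_rw [e1] at h
  rw [h]
  have : ∀ ρ : ℝ, ENNReal.ofReal ρ * (Set.Ioi (√r)).indicator
      (fun ρ => ENNReal.ofReal (Real.exp (-1 * ρ ^ 2))) ρ =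
      (Set.Ioi (√r)).indicator (fun ρ => ENNReal.ofReal (ρ * Real.exp (-1 * ρ ^ 2))) ρ := by
    intro ρ
    by_cases hh : ρ ∈ Set.Ioi (√r)
    · simp only [Set.indicator_of_mem hh]
      exact (ENNReal.ofReal_mul' (Real.exp_nonneg _)).symm
    · simp only [Set.indicator_of_notMem hh, mul_zero]
  simp_rw [this]
  rw [setLIntegral_indicator measurableSet_Ioi,
    Set.inter_eq_left.2 (Set.Ioi_subset_Ioi (Real.sqrt_nonneg r)),
    lintegral_half 1 _ one_pos (Real.sqrt_nonneg r), ← ENNReal.ofReal_mul (by positivity)]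
  congr 1
  rw [Real.sq_sqrt hr]
  simp
  ring

lemma lintegral_pow_aux (f : ℂ → ENNReal) (hf : Measurable f) (n : ℕ) :
    ∫⁻ x : Fin n → ℂ, ∏ i, f (x i) = (∫⁻ z, f z) ^ n := by
  induction n with
  | zero => simp [volume_pi]
  | succ n ih =>
    rw [← (volume_preserving_piFinSuccAbove (fun _ : Fin (n+1) => ℂ) 0).symm.lintegral_comp
      (by fun_prop)]
    simp only [Fin.prod_univ_succ, MeasurableEquiv.piFinSuccAbove_symm_apply, Fin.insertNthEquiv,
      Equiv.coe_fn_mk, Fin.insertNth_zero, Fin.cons_zero, Fin.cons_succ]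
    simp
    rw [Measure.volume_eq_prod, lintegral_prod_mul (g := fun y : Fin n → ℂ => ∏ i, f (y i))
      hf.aemeasurable
      (Measurable.aemeasurable (by fun_prop)), ih, pow_succ']

lemma gauss_S (n : ℕ) (s : ℝ) (hs : 0 ≤ s) (hs1 : s < 1) :
    ∫⁻ x : Fin (n+1) → ℂ, {x : Fin (n+1) → ℂ | s * ∑ i, ‖x i‖ ^ 2 < ‖x 0‖ ^ 2}.indicator
      (fun x => ENNReal.ofReal (Real.exp (-∑ i, ‖x i‖ ^ 2))) x
      = ENNReal.ofReal (Real.pi ^ (n+1) * (1 - s) ^ n) := by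
  have h1s : 0 < 1 - s := by linarith
  have hS : MeasurableSet {x : Fin (n+1) → ℂ | s * ∑ i, ‖x i‖ ^ 2 < ‖x 0‖ ^ 2} :=
    measurableSet_lt (by fun_prop) (by fun_prop)
  have hm : Measurable ({x : Fin (n+1) → ℂ | s * ∑ i, ‖x i‖ ^ 2 < ‖x 0‖ ^ 2}.indicator
      (fun x => ENNReal.ofReal (Real.exp (-∑ i, ‖x i‖ ^ 2)))) :=
    (by fun_prop : Measurable (fun x : Fin (n+1) → ℂ =>
      ENNReal.ofReal (Real.exp (-∑ i, ‖x i‖ ^ 2)))).indicator hS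
  rw [← (volume_preserving_piFinSuccAbove (fun _ : Fin (n+1) => ℂ) 0).symm.lintegral_comp hm]
  rw [Measure.volume_eq_prod, lintegral_prod_symm]
  rotate_left
  · exact (hm.comp (MeasurableEquiv.measurable _)).aemeasurable
  have inner : ∀ y : Fin n → ℂ, ∫⁻ z : ℂ,
      {x : Fin (n+1) → ℂ | s * ∑ i, ‖x i‖ ^ 2 < ‖x 0‖ ^ 2}.indicator
      (fun x => ENNReal.ofReal (Real.exp (-∑ i, ‖x i‖ ^ 2)))
      ((MeasurableEquiv.piFinSuccAbove (fun _ : Fin (n+1) => ℂ) 0).symm (z, y))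
      = ENNReal.ofReal Real.pi *
        ∏ i, ENNReal.ofReal (Real.exp (-(1 / (1 - s)) * ‖y i‖ ^ 2)) := by
    intro y
    have e : ∀ z : ℂ, {x : Fin (n+1) → ℂ | s * ∑ i, ‖x i‖ ^ 2 < ‖x 0‖ ^ 2}.indicator
      (fun x => ENNReal.ofReal (Real.exp (-∑ i, ‖x i‖ ^ 2)))
      ((MeasurableEquiv.piFinSuccAbove (fun _ : Fin (n+1) => ℂ) 0).symm (z, y))
      = ENNReal.ofReal (Real.exp (-∑ i, ‖y i‖ ^ 2)) *
        {z : ℂ | s / (1 - s) * (∑ i, ‖y i‖ ^ 2) < ‖z‖ ^ 2}.indicator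
      (fun z => ENNReal.ofReal (Real.exp (-1 * ‖z‖ ^ 2))) z := by
      intro z
      have ee : ((MeasurableEquiv.piFinSuccAbove (fun _ : Fin (n+1) => ℂ) 0).symm (z, y))
        = (Fin.cons z y : Fin (n+1) → ℂ) := by
        simp [MeasurableEquiv.piFinSuccAbove_symm_apply, Fin.insertNthEquiv]
      rw [ee]
      have hiff : s * (‖z‖ ^ 2 + ∑ i, ‖y i‖ ^ 2) < ‖z‖ ^ 2 ↔
          s / (1 - s) * (∑ i, ‖y i‖ ^ 2) < ‖z‖ ^ 2 := by
        rw [div_mul_eq_mul_div, div_lt_iff₀ h1s]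
        constructor <;> intro h <;> linarith
      simp only [Set.indicator, Set.mem_ofPred_eq, Fin.sum_univ_succ, Fin.cons_zero, Fin.cons_succ,
        hiff]
      split_ifs
      · rw [← ENNReal.ofReal_mul (Real.exp_nonneg _), ← Real.exp_add]
        ring_nf
      · simp
    simp_rw [e]
    rw [lintegral_const_mul' _ _ ENNReal.ofReal_ne_top, gauss_tail _ (by positivity),
      ← ENNReal.ofReal_mul (Real.exp_nonneg _),
      ← ENNReal.ofReal_prod_of_nonneg (fun _ _ => Real.exp_nonneg _),
      ← ENNReal.ofReal_mul Real.pi_nonneg, ← Real.exp_sum, ← Finset.mul_sum,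
      mul_left_comm, ← Real.exp_add]
    congr 3
    field_simp
    ring
  simp_rw [inner]
  rw [lintegral_const_mul' _ _ ENNReal.ofReal_ne_top,
    lintegral_pow_aux (fun z => ENNReal.ofReal (Real.exp (-(1 / (1 - s)) * ‖z‖ ^ 2)))
      (by fun_prop), gauss_total _ (by positivity), ← ENNReal.ofReal_pow (by positivity),
      ← ENNReal.ofReal_mul Real.pi_nonneg]
  congr 1
  rw [div_div_eq_mul_div, div_one, mul_pow]
  ring

lemma gauss_all (n : ℕ) :
    ∫⁻ x : Fin n → ℂ, ENNReal.ofReal (Real.exp (-∑ i, ‖x i‖ ^ 2))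
      = ENNReal.ofReal (Real.pi ^ n) := by
  have h := lintegral_pow_aux (fun z => ENNReal.ofReal (Real.exp (-1 * ‖z‖ ^ 2)))
      (by fun_prop) n
  rw [gauss_total 1 one_pos, div_one, ← ENNReal.ofReal_pow Real.pi_nonneg] at h
  rw [← h]
  congr 1
  ext x
  rw [← ENNReal.ofReal_prod_of_nonneg (fun _ _ => Real.exp_nonneg _), ← Real.exp_sum]
  simp

lemma sqn_eq {d : ℕ} (x : Fin d → ℂ) : ((∑ i, ‖x i‖ ^ 2 : ℝ) : ℂ) = star x ⬝ᵥ x := by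
  simp [dotProduct, Complex.conj_mul']

lemma sqn_mulVec {d : ℕ} (U : Matrix.unitaryGroup (Fin d) ℂ) (x : Fin d → ℂ) :
    ∑ i, ‖((U : Matrix (Fin d) (Fin d) ℂ) *ᵥ x) i‖ ^ 2 = ∑ i, ‖x i‖ ^ 2 := by
  have : ((∑ i, ‖((U : Matrix (Fin d) (Fin d) ℂ) *ᵥ x) i‖ ^ 2 : ℝ) : ℂ)
      = ((∑ i, ‖x i‖ ^ 2 : ℝ) : ℂ) := by
    rw [sqn_eq, sqn_eq, star_mulVec, dotProduct_mulVec, vecMul_vecMul]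
    have := (Matrix.mem_unitaryGroup_iff'.1 U.2)
    rw [Matrix.star_eq_conjTranspose] at this
    rw [this, vecMul_one]
  exact_mod_cast this

lemma vol_unitary {d : ℕ} (U : Matrix.unitaryGroup (Fin d) ℂ) :
    MeasurePreserving (fun x : Fin d → ℂ => (U : Matrix (Fin d) (Fin d) ℂ) *ᵥ x)
      volume volume := by
  have hm : Measurable (fun x : Fin d → ℂ => (U : Matrix (Fin d) (Fin d) ℂ) *ᵥ x) := by
    apply Continuous.measurable; fun_prop
  refine ⟨hm, ?_⟩
  have hdet : LinearMap.det ((Matrix.toLin' (U : Matrix (Fin d) (Fin d) ℂ)).restrictScalars ℝ)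
      = 1 := by
    rw [LinearMap.det_restrictScalars, LinearMap.det_toLin', Algebra.norm_complex_apply]
    have h := congrArg Matrix.det (Matrix.mem_unitaryGroup_iff'.1 U.2)
    rw [Matrix.det_mul, Matrix.star_eq_conjTranspose, Matrix.det_conjTranspose, det_one] at h
    have h2 : ((Complex.normSq (U : Matrix (Fin d) (Fin d) ℂ).det : ℝ) : ℂ) = 1 := by
      rw [Complex.normSq_eq_conj_mul_self]; exact h
    exact_mod_cast h2
  have := Measure.map_linearMap_addHaar_eq_smul_addHaar (volume : Measure (Fin d → ℂ))
    (f := ((Matrix.toLin' (U : Matrix (Fin d) (Fin d) ℂ)).restrictScalars ℝ)) (by simp [hdet])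
  rw [hdet] at this
  have e : ⇑((Matrix.toLin' (U : Matrix (Fin d) (Fin d) ℂ)).restrictScalars ℝ) =
      fun x : Fin d → ℂ => (U : Matrix (Fin d) (Fin d) ℂ) *ᵥ x := by
    ext x; simp
  rw [e] at this
  simpa using this

lemma exists_unitary {d : ℕ} (i₀ : Fin d) (v : Fin d → ℂ) (hv : ∑ i, ‖v i‖ ^ 2 = 1) :
    ∃ W : Matrix.unitaryGroup (Fin d) ℂ,
      (W : Matrix (Fin d) (Fin d) ℂ) *ᵥ (Pi.single i₀ 1) = v := by
  let v' : EuclideanSpace ℂ (Fin d) := WithLp.toLp 2 v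
  have hv' : ‖v'‖ = 1 := by
    rw [EuclideanSpace.norm_eq]; simp [v', hv]
  have ho : Orthonormal ℂ (({i₀} : Set (Fin d)).domRestrict (fun _ : Fin d => v')) := by
    constructor
    · intro i; simpa using hv'
    · intro i j hij
      exact absurd (Subsingleton.elim i j) hij
  obtain ⟨b, hb⟩ := Orthonormal.exists_orthonormalBasis_extension_of_card_eq (by simp) ho
  refine ⟨⟨_, (EuclideanSpace.basisFun (Fin d) ℂ).toMatrix_orthonormalBasis_mem_unitary b⟩, ?_⟩
  ext i
  have := hb i₀ rfl
  simp [Module.Basis.toMatrix_apply, this, v']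

lemma continuous_entry {d : ℕ} (a v : Fin d → ℂ) :
    Continuous (fun U : Matrix.unitaryGroup (Fin d) ℂ =>
      ‖star a ⬝ᵥ ((U : Matrix (Fin d) (Fin d) ℂ) *ᵥ v)‖ ^ 2) := by
  have h : Continuous (fun U : Matrix.unitaryGroup (Fin d) ℂ => (U : Matrix (Fin d) (Fin d) ℂ)) :=
    continuous_subtype_val
  fun_prop

lemma law_const {d : ℕ} (i₀ : Fin d) (μ : Measure (Matrix.unitaryGroup (Fin d) ℂ))
    [IsProbabilityMeasure μ] [μ.IsHaarMeasure] (s : ℝ) (a v : Fin d → ℂ)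
    (ha : ∑ i, ‖a i‖ ^ 2 = 1) (hv : ∑ i, ‖v i‖ ^ 2 = 1) :
    μ {U | s < ‖star a ⬝ᵥ ((U : Matrix (Fin d) (Fin d) ℂ) *ᵥ v)‖ ^ 2} =
      μ {U | s < ‖star (Pi.single i₀ 1 : Fin d → ℂ) ⬝ᵥ
        ((U : Matrix (Fin d) (Fin d) ℂ) *ᵥ (Pi.single i₀ 1))‖ ^ 2} := by
  obtain ⟨W, rfl⟩ := exists_unitary i₀ a ha
  obtain ⟨X, rfl⟩ := exists_unitary i₀ v hv
  set e : Fin d → ℂ := Pi.single i₀ 1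
  set A : Set (Matrix.unitaryGroup (Fin d) ℂ) :=
    {U | s < ‖star e ⬝ᵥ ((U : Matrix (Fin d) (Fin d) ℂ) *ᵥ e)‖ ^ 2} with hA
  have hAm : MeasurableSet A := (isOpen_lt continuous_const (continuous_entry e e)).measurableSet
  rw [← measure_preimage_mul_right_aux μ X A hAm, ← measure_preimage_mul μ W⁻¹ ((fun h => h * X) ⁻¹' A)]
  congr 1
  ext U
  simp only [Set.mem_preimage, Set.mem_ofPred_eq, hA]
  rw [star_mulVec, ← dotProduct_mulVec, mulVec_mulVec, mulVec_mulVec]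
  simp [Matrix.star_eq_conjTranspose, mul_assoc]

lemma law_const' {d : ℕ} (i₀ : Fin d) (μ : Measure (Matrix.unitaryGroup (Fin d) ℂ))
    [IsProbabilityMeasure μ] [μ.IsHaarMeasure] (s : ℝ) (x : Fin d → ℂ) (hx : x ≠ 0) :
    μ {U | s * ∑ i, ‖x i‖ ^ 2 < ‖((U : Matrix (Fin d) (Fin d) ℂ) *ᵥ x) i₀‖ ^ 2} =
      μ {U | s < ‖star (Pi.single i₀ 1 : Fin d → ℂ) ⬝ᵥ
        ((U : Matrix (Fin d) (Fin d) ℂ) *ᵥ (Pi.single i₀ 1))‖ ^ 2} := by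
  have hN : 0 < ∑ i, ‖x i‖ ^ 2 := by
    obtain ⟨i, hi⟩ := Function.ne_iff.1 hx
    refine Finset.sum_pos' (fun _ _ => by positivity) ⟨i, Finset.mem_univ _, ?_⟩
    have : x i ≠ 0 := hi
    positivity
  set N := ∑ i, ‖x i‖ ^ 2 with hNdef
  have hsq : √N ^ 2 = N := Real.sq_sqrt hN.le
  rw [← law_const i₀ μ s (Pi.single i₀ 1) (((√N : ℝ) : ℂ)⁻¹ • x)]
  · congr 1
    ext U
    simp only [Set.mem_ofPred_eq, mulVec_smul, dotProduct_smul, smul_eq_mul, norm_mul, mul_pow,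
      norm_inv, Complex.norm_real, Real.norm_eq_abs, inv_pow, sq_abs, hsq]
    have : star (Pi.single i₀ 1 : Fin d → ℂ) ⬝ᵥ ((U : Matrix (Fin d) (Fin d) ℂ) *ᵥ x) =
        ((U : Matrix (Fin d) (Fin d) ℂ) *ᵥ x) i₀ := by
      rw [← Pi.single_star]; simp
    rw [this, inv_mul_eq_div, lt_div_iff₀ hN]
  · rw [Finset.sum_eq_single i₀]
    · simp
    · intro j _ hj; simp [hj]
    · simp
  · simp only [Pi.smul_apply, smul_eq_mul, norm_mul, mul_pow,
      norm_inv, Complex.norm_real, Real.norm_eq_abs, inv_pow, sq_abs, hsq]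
    rw [← Finset.mul_sum, ← hNdef, inv_mul_cancel₀ hN.ne']

lemma tail_law {n : ℕ} (μ : Measure (Matrix.unitaryGroup (Fin (n+1)) ℂ))
    [IsProbabilityMeasure μ] [μ.IsHaarMeasure] (s : ℝ) (hs : 0 ≤ s) (hs1 : s < 1) :
    μ {U | s < ‖star (Pi.single 0 1 : Fin (n+1) → ℂ) ⬝ᵥ
        ((U : Matrix (Fin (n+1)) (Fin (n+1)) ℂ) *ᵥ (Pi.single 0 1))‖ ^ 2}
      = ENNReal.ofReal ((1 - s) ^ n) := by
  set p := μ {U | s < ‖star (Pi.single 0 1 : Fin (n+1) → ℂ) ⬝ᵥ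
        ((U : Matrix (Fin (n+1)) (Fin (n+1)) ℂ) *ᵥ (Pi.single 0 1))‖ ^ 2} with hp
  set g : (Fin (n+1) → ℂ) → ENNReal := fun x => ENNReal.ofReal (Real.exp (-∑ i, ‖x i‖ ^ 2))
    with hg
  have hgm : Measurable g := by fun_prop
  set S : Set (Fin (n+1) → ℂ) := {x | s * ∑ i, ‖x i‖ ^ 2 < ‖x 0‖ ^ 2} with hS
  have hSm : MeasurableSet S := measurableSet_lt (by fun_prop) (by fun_prop)
  have hact : Continuous (fun q : Matrix.unitaryGroup (Fin (n+1)) ℂ × (Fin (n+1) → ℂ) =>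
      (q.1 : Matrix (Fin (n+1)) (Fin (n+1)) ℂ) *ᵥ q.2) := by
    have h : Continuous (fun q : Matrix.unitaryGroup (Fin (n+1)) ℂ × (Fin (n+1) → ℂ) =>
      (q.1 : Matrix (Fin (n+1)) (Fin (n+1)) ℂ)) := continuous_subtype_val.comp continuous_fst
    fun_prop
  have h1 : ∀ U : Matrix.unitaryGroup (Fin (n+1)) ℂ,
      ∫⁻ x, S.indicator g ((U : Matrix (Fin (n+1)) (Fin (n+1)) ℂ) *ᵥ x)
      = ENNReal.ofReal (Real.pi ^ (n+1) * (1 - s) ^ n) := by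
    intro U
    rw [(vol_unitary U).lintegral_comp (hgm.indicator hSm)]
    exact gauss_S n s hs hs1
  have h2 : ∫⁻ U : Matrix.unitaryGroup (Fin (n+1)) ℂ,
      (∫⁻ x, S.indicator g ((U : Matrix (Fin (n+1)) (Fin (n+1)) ℂ) *ᵥ x)) ∂μ
      = ENNReal.ofReal (Real.pi ^ (n+1) * (1 - s) ^ n) := by
    simp_rw [h1]; simp
  rw [lintegral_lintegral_swap] at h2
  rotate_left
  · exact ((hgm.indicator hSm).comp hact.measurable).aemeasurable
  have h3 : ∀ x : Fin (n+1) → ℂ, x ≠ 0 →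
      ∫⁻ U, S.indicator g ((U : Matrix (Fin (n+1)) (Fin (n+1)) ℂ) *ᵥ x) ∂μ = p * g x := by
    intro x hx
    rw [hp, ← law_const' 0 μ s x hx]
    have hT : MeasurableSet {U : Matrix.unitaryGroup (Fin (n+1)) ℂ | s * ∑ i, ‖x i‖ ^ 2 <
        ‖((U : Matrix (Fin (n+1)) (Fin (n+1)) ℂ) *ᵥ x) 0‖ ^ 2} := by
      refine (isOpen_lt continuous_const ?_).measurableSet
      have : Continuous (fun U : Matrix.unitaryGroup (Fin (n+1)) ℂ =>
        (U : Matrix (Fin (n+1)) (Fin (n+1)) ℂ) *ᵥ x) :=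
        hact.comp (Continuous.prodMk_left x)
      fun_prop
    have : ∀ U : Matrix.unitaryGroup (Fin (n+1)) ℂ,
        S.indicator g ((U : Matrix (Fin (n+1)) (Fin (n+1)) ℂ) *ᵥ x) =
        {U : Matrix.unitaryGroup (Fin (n+1)) ℂ | s * ∑ i, ‖x i‖ ^ 2 <
        ‖((U : Matrix (Fin (n+1)) (Fin (n+1)) ℂ) *ᵥ x) 0‖ ^ 2}.indicator (fun _ => g x) U := by
      intro U
      simp only [Set.indicator, hS, Set.mem_ofPred_eq, sqn_mulVec, hg]
    simp_rw [this]
    rw [lintegral_indicator hT, setLIntegral_const, mul_comm]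
  have h4 : ∫⁻ x, ∫⁻ U, S.indicator g ((U : Matrix (Fin (n+1)) (Fin (n+1)) ℂ) *ᵥ x) ∂μ
      = ∫⁻ x, p * g x := by
    apply lintegral_congr_ae
    have : ∀ᵐ x : Fin (n+1) → ℂ, x ≠ 0 := by
      simp [ae_iff]
    filter_upwards [this] with x hx using h3 x hx
  rw [h4, lintegral_const_mul _ hgm, gauss_all, mul_comm, ENNReal.ofReal_mul (by positivity)] at h2
  exact (ENNReal.mul_right_inj (by simp; positivity) ENNReal.ofReal_ne_top).1 h2

lemma cdf_law {n : ℕ} (μ : Measure (Matrix.unitaryGroup (Fin (n+1)) ℂ)) (hn : n ≠ 0)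
    [IsProbabilityMeasure μ] [μ.IsHaarMeasure] (s : ℝ) (hs : 0 ≤ s) (hs1 : s ≤ 1)
    (a v : Fin (n+1) → ℂ)
    (ha : ∑ i, ‖a i‖ ^ 2 = 1) (hv : ∑ i, ‖v i‖ ^ 2 = 1) :
    μ {U | ‖star a ⬝ᵥ ((U : Matrix (Fin (n+1)) (Fin (n+1)) ℂ) *ᵥ v)‖ ^ 2 ≤ s} =
      ENNReal.ofReal (1 - (1 - s) ^ n) := by
  have hlt : μ {U | s < ‖star a ⬝ᵥ ((U : Matrix (Fin (n+1)) (Fin (n+1)) ℂ) *ᵥ v)‖ ^ 2} =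
      ENNReal.ofReal ((1 - s) ^ n) := by
    rw [law_const 0 μ s a v ha hv]
    rcases hs1.lt_or_eq with h | rfl
    · exact tail_law μ s hs h
    · have : {U : Matrix.unitaryGroup (Fin (n+1)) ℂ | (1 : ℝ) <
          ‖star (Pi.single 0 1 : Fin (n+1) → ℂ) ⬝ᵥ
          ((U : Matrix (Fin (n+1)) (Fin (n+1)) ℂ) *ᵥ (Pi.single 0 1))‖ ^ 2} = ∅ := by
        ext U
        have := entry_norm_bound_of_unitary U.2 0 0
        rw [← Pi.single_star]
        simp
        exact this
      rw [this]
      simp [hn]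
  have hm : MeasurableSet {U : Matrix.unitaryGroup (Fin (n+1)) ℂ |
      s < ‖star a ⬝ᵥ ((U : Matrix (Fin (n+1)) (Fin (n+1)) ℂ) *ᵥ v)‖ ^ 2} :=
    (isOpen_lt continuous_const (continuous_entry a v)).measurableSet
  have := prob_compl_eq_one_sub (μ := μ) hm
  rw [hlt, ← ENNReal.ofReal_one, ← ENNReal.ofReal_sub _ (pow_nonneg (by linarith) _)] at this
  rw [← this]
  congr 1
  ext U
  simp

lemma fid_eq {d : ℕ} (a b : Fin d → ℂ) (U V : Matrix (Fin d) (Fin d) ℂ) :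
    ‖bipInner (fun p : Fin d × Fin d => a p.1 * b p.2) (kronAct U V (maxEnt d))‖ ^ 2
      = (1 / d) * ‖star a ⬝ᵥ (U *ᵥ (Vᵀ *ᵥ star b))‖ ^ 2 := by
  have : bipInner (fun p : Fin d × Fin d => a p.1 * b p.2) (kronAct U V (maxEnt d)) =
      (1 / Real.sqrt d : ℂ) * (star a ⬝ᵥ (U *ᵥ (Vᵀ *ᵥ star b))) := by
    simp only [bipInner, kronAct, maxEnt, Fintype.sum_prod_type, dotProduct, mulVec,
      mul_ite, mul_zero, Finset.sum_ite_eq, Finset.mem_univ, if_true, Finset.mul_sum,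
      Pi.star_apply, transpose_apply]
    refine Finset.sum_congr rfl fun i _ => ?_
    rw [Finset.sum_comm]
    refine Finset.sum_congr rfl fun j _ => Finset.sum_congr rfl fun k _ => ?_
    simp
    ring
  rw [this, norm_mul, mul_pow]
  congr 1
  simp

lemma density_cdf (d : ℕ) (hd : 2 ≤ d) (m : ℝ) (hm : 0 ≤ m) (hm1 : m ≤ 1 / d) :
    ∫⁻ f in Set.Icc 0 m, ENNReal.ofReal ((d : ℝ) * ((d : ℝ) - 1) * (1 - (d : ℝ) * f) ^ (d - 2))
      = ENNReal.ofReal (1 - (1 - d * m) ^ (d - 1)) := by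
  obtain ⟨k, rfl⟩ : ∃ k, d = k + 2 := ⟨d - 2, by omega⟩
  have hdpos : (0 : ℝ) < ((k + 2 : ℕ) : ℝ) := by positivity
  have hcont : Continuous (fun f : ℝ => ((k+2 : ℕ) : ℝ) * (((k+2 : ℕ) : ℝ) - 1) *
      (1 - ((k+2 : ℕ) : ℝ) * f) ^ (k + 2 - 2)) := by fun_prop
  rw [← ofReal_integral_eq_lintegral_ofReal (hcont.integrableOn_Icc)]
  · rw [integral_Icc_eq_integral_Ioc, ← intervalIntegral.integral_of_le hm,
      intervalIntegral.integral_eq_sub_of_hasDerivAt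
        (f := fun f : ℝ => - (1 - ((k+2 : ℕ) : ℝ) * f) ^ (k + 1))]
    · congr 1
      simp
      ring
    · intro x _
      have h1 : HasDerivAt (fun f : ℝ => 1 - ((k+2 : ℕ) : ℝ) * f) (-((k+2 : ℕ) : ℝ)) x := by
        simpa using ((hasDerivAt_id x).const_mul ((k+2 : ℕ) : ℝ)).const_sub 1
      refine (h1.pow (k+1)).neg.congr_deriv ?_
      simp only [Nat.add_sub_cancel]
      push_cast
      ring
    · exact hcont.intervalIntegrable _ _
  · refine (ae_restrict_iff' measurableSet_Icc).2 (Filter.Eventually.of_forall ?_)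
    intro f hf
    have h2 : ((k+2 : ℕ) : ℝ) * f ≤ 1 := by
      have := hf.2.trans hm1
      rw [le_div_iff₀ hdpos] at this
      linarith
    have h3 : (0 : ℝ) ≤ ((k+2 : ℕ) : ℝ) - 1 := by push_cast; linarith [(Nat.cast_nonneg k : (0:ℝ) ≤ k)]
    have h4 : 0 ≤ 1 - ((k+2 : ℕ) : ℝ) * f := by linarith
    exact mul_nonneg (mul_nonneg hdpos.le h3) (pow_nonneg h4 _)

/-- For `d ≥ 2`, unit vectors `a, b` in `ℂ^d`, and independent
Haar-distributed `(U_a, U_b)`, the fidelity `|⟨a ⊗ b, (U_a ⊗ U_b)Φ⟩|²` of a locally rotated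
maximally entangled state with a fixed product state has CDF `t ↦ 1 - (1 - d t)^(d-1)` on
`[0, 1/d]`; equivalently, its distribution has density `f ↦ d(d-1)(1-df)^(d-2)` on `[0,1/d]`
and `0` on `(1/d, 1]` with respect to Lebesgue measure. -/
theorem fidelity_distribution_maxEnt_vs_product (d : ℕ) (hd : 2 ≤ d)
    (a b : Fin d → ℂ) (ha : ∑ i : Fin d, ‖a i‖ ^ 2 = 1) (hb : ∑ i : Fin d, ‖b i‖ ^ 2 = 1)
    (μ : Measure (Matrix.unitaryGroup (Fin d) ℂ))
    [IsProbabilityMeasure μ] [μ.IsHaarMeasure] :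
    (∀ t ∈ Set.Icc (0 : ℝ) (1 / d),
      (μ.prod μ) {UV : Matrix.unitaryGroup (Fin d) ℂ × Matrix.unitaryGroup (Fin d) ℂ |
          ‖bipInner (fun p : Fin d × Fin d => a p.1 * b p.2)
            (kronAct (UV.1 : Matrix (Fin d) (Fin d) ℂ) (UV.2 : Matrix (Fin d) (Fin d) ℂ)
              (maxEnt d))‖ ^ 2 ≤ t}
        = ENNReal.ofReal (1 - (1 - d * t) ^ (d - 1))) ∧
    Measure.map (fun UV : Matrix.unitaryGroup (Fin d) ℂ × Matrix.unitaryGroup (Fin d) ℂ =>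
        ‖bipInner (fun p : Fin d × Fin d => a p.1 * b p.2)
          (kronAct (UV.1 : Matrix (Fin d) (Fin d) ℂ) (UV.2 : Matrix (Fin d) (Fin d) ℂ)
            (maxEnt d))‖ ^ 2) (μ.prod μ)
      = volume.withDensity (fun f : ℝ =>
          ENNReal.ofReal
            (if 0 ≤ f ∧ f ≤ 1 / (d : ℝ) then
              (d : ℝ) * ((d : ℝ) - 1) * (1 - (d : ℝ) * f) ^ (d - 2)
            else 0)) := by
  obtain ⟨n, rfl⟩ : ∃ n, d = n + 1 := ⟨d - 1, by omega⟩
  have hn : n ≠ 0 := by omega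
  have hdpos : (0 : ℝ) < ((n + 1 : ℕ) : ℝ) := by positivity
  set F : Matrix.unitaryGroup (Fin (n+1)) ℂ × Matrix.unitaryGroup (Fin (n+1)) ℂ → ℝ := fun UV =>
    ‖bipInner (fun p : Fin (n+1) × Fin (n+1) => a p.1 * b p.2)
      (kronAct (UV.1 : Matrix (Fin (n+1)) (Fin (n+1)) ℂ) (UV.2 : Matrix (Fin (n+1)) (Fin (n+1)) ℂ)
        (maxEnt (n+1)))‖ ^ 2 with hF
  have hF' : ∀ UV, F UV = (1 / ((n + 1 : ℕ) : ℝ)) *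
      ‖star a ⬝ᵥ ((UV.1 : Matrix (Fin (n+1)) (Fin (n+1)) ℂ) *ᵥ
        ((UV.2 : Matrix (Fin (n+1)) (Fin (n+1)) ℂ)ᵀ *ᵥ star b))‖ ^ 2 := fun UV => fid_eq a b _ _
  have hFc : Continuous F := by
    rw [funext hF']
    have h1 : Continuous (fun UV : Matrix.unitaryGroup (Fin (n+1)) ℂ ×
      Matrix.unitaryGroup (Fin (n+1)) ℂ => (UV.1 : Matrix (Fin (n+1)) (Fin (n+1)) ℂ)) :=
      continuous_subtype_val.comp continuous_fst
    have h2 : Continuous (fun UV : Matrix.unitaryGroup (Fin (n+1)) ℂ ×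
      Matrix.unitaryGroup (Fin (n+1)) ℂ => (UV.2 : Matrix (Fin (n+1)) (Fin (n+1)) ℂ)) :=
      continuous_subtype_val.comp continuous_snd
    have h3 := h2.matrix_transpose
    fun_prop
  have hFnn : ∀ UV, 0 ≤ F UV := fun UV => by positivity
  have cdf : ∀ t ∈ Set.Icc (0 : ℝ) (1 / ((n + 1 : ℕ) : ℝ)),
      (μ.prod μ) {UV | F UV ≤ t} =
        ENNReal.ofReal (1 - (1 - ((n + 1 : ℕ) : ℝ) * t) ^ (n + 1 - 1)) := by
    intro t ht
    have ht2 : ((n + 1 : ℕ) : ℝ) * t ≤ 1 := by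
      have := ht.2
      rw [le_div_iff₀ hdpos] at this
      linarith
    have hms : MeasurableSet {UV | F UV ≤ t} :=
      (isClosed_le hFc continuous_const).measurableSet
    rw [Measure.prod_apply_symm hms]
    have : ∀ V : Matrix.unitaryGroup (Fin (n+1)) ℂ,
        μ ((fun U => (U, V)) ⁻¹' {UV | F UV ≤ t}) =
          ENNReal.ofReal (1 - (1 - ((n + 1 : ℕ) : ℝ) * t) ^ n) := by
      intro V
      rw [← cdf_law μ hn (((n + 1 : ℕ) : ℝ) * t) (mul_nonneg hdpos.le ht.1) ht2 a
        ((V : Matrix (Fin (n+1)) (Fin (n+1)) ℂ)ᵀ *ᵥ star b) ha ?_]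
      · congr 1
        ext U
        simp only [Set.mem_preimage, Set.mem_ofPred_eq, hF']
        rw [one_div, inv_mul_le_iff₀ hdpos]
      · have hVT : (V : Matrix (Fin (n+1)) (Fin (n+1)) ℂ)ᵀ ∈ Matrix.unitaryGroup (Fin (n+1)) ℂ := by
          rw [Matrix.mem_unitaryGroup_iff]
          have h := congrArg Matrix.transpose (Matrix.mem_unitaryGroup_iff'.1 V.2)
          rw [Matrix.transpose_mul, Matrix.transpose_one] at h
          exact h
        rw [sqn_mulVec ⟨_, hVT⟩ (star b)]
        simpa using hb
    simp_rw [this]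
    simp
  refine ⟨cdf, ?_⟩
  have : IsProbabilityMeasure (Measure.map F (μ.prod μ)) :=
    Measure.isProbabilityMeasure_map hFc.measurable.aemeasurable
  refine Measure.ext_of_Iic _ _ fun t => ?_
  rw [Measure.map_apply hFc.measurable measurableSet_Iic, withDensity_apply _ measurableSet_Iic]
  have hind : (fun f : ℝ => ENNReal.ofReal
      (if 0 ≤ f ∧ f ≤ 1 / ((n + 1 : ℕ) : ℝ) then
        ((n + 1 : ℕ) : ℝ) * (((n + 1 : ℕ) : ℝ) - 1) * (1 - ((n + 1 : ℕ) : ℝ) * f) ^ (n + 1 - 2)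
        else 0)) =
      (Set.Icc 0 (1 / ((n + 1 : ℕ) : ℝ))).indicator (fun f : ℝ => ENNReal.ofReal
        (((n + 1 : ℕ) : ℝ) * (((n + 1 : ℕ) : ℝ) - 1) *
          (1 - ((n + 1 : ℕ) : ℝ) * f) ^ (n + 1 - 2))) := by
    ext f
    simp only [Set.indicator, Set.mem_Icc]
    split_ifs <;> simp
  rw [hind, setLIntegral_indicator measurableSet_Icc]
  have hI : Set.Icc 0 (1 / ((n + 1 : ℕ) : ℝ)) ∩ Set.Iic t =
      Set.Icc 0 (min (1 / ((n + 1 : ℕ) : ℝ)) t) := by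
    ext x
    simp only [Set.mem_inter_iff, Set.mem_Icc, Set.mem_Iic, le_min_iff, and_assoc]
  rw [hI]
  rcases lt_or_ge t 0 with h | h
  · have e1 : F ⁻¹' Set.Iic t = ∅ := by
      ext UV
      have := hFnn UV
      simp
      linarith
    have e2 : Set.Icc 0 (min (1 / ((n + 1 : ℕ) : ℝ)) t) = ∅ :=
      Set.Icc_eq_empty (by simp only [le_min_iff, not_and, not_le]; intro; exact h)
    rw [e1, e2]; simp
  · have hm0 : 0 ≤ min (1 / ((n + 1 : ℕ) : ℝ)) t := le_min (by positivity) h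
    rw [density_cdf (n+1) hd _ hm0 (min_le_left _ _), ← cdf _ ⟨hm0, min_le_left _ _⟩]
    rcases le_total t (1 / ((n + 1 : ℕ) : ℝ)) with h' | h'
    · rw [min_eq_right h']; rfl
    · rw [min_eq_left h']
      have h1 : (μ.prod μ) {UV | F UV ≤ 1 / ((n + 1 : ℕ) : ℝ)} = 1 := by
        rw [cdf _ ⟨by positivity, le_rfl⟩, mul_one_div_cancel hdpos.ne']
        simp [hn]
      refine le_antisymm ?_ (measure_mono fun UV hUV => le_trans hUV h')
      rw [h1]
      exact prob_le_one
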